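/- arXiv:1911.08196 — 4 statements merged into one kernel-verified Lean document; each statement's English description precedes it below -/
import Mathlib

section
/- For every network defending instance with nonempty node set and every resource amount R ≥ 0, there exists a defending strategy r* with total resource R whose defending result equals the infimum, over all defending strategies with total resource R, of the defending result; i.e., an optimal defending strategy exists. -/
open scoped Classical

/-- A network defending instance: a finite simple undirected graph together with
nonnegative symmetric edge weights `w`, thresholds `LB ≤ UB`, and values `g' ≤ g`. -/
structure DefInstance (V : Type*) where
  G : SimpleGraph V
  w : V → V → ℝ
  w_nonneg : ∀ u v, 0 ≤ w u v
  w_symm : ∀ u v, w u v = w v u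
  LB : V → ℝ
  UB : V → ℝ
  g : V → ℝ
  g' : V → ℝ
  LB_nonneg : ∀ u, 0 ≤ LB u
  LB_le_UB : ∀ u, LB u ≤ UB u
  g'_nonneg : ∀ u, 0 ≤ g' u
  g'_le_g : ∀ u, g' u ≤ g u

variable {V : Type*} [Fintype V]

/-- The defending power of node `u` under resource allocation `r`:
`p_u = r_u + ∑_{v : (u,v) ∈ E} w_{uv} · r_v`. -/
noncomputable def power (I : DefInstance V) (r : V → ℝ) (u : V) : ℝ :=
  r u + ∑ v ∈ Finset.univ.filter (fun v => I.G.Adj u v), I.w u v * r v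

/-- The attacker's gain when attacking node `u`: it is `g_u` if `p_u < LB_u`;
it is `g'_u` if `LB_u ≤ p_u < UB_u` and some neighbor `v` has `p_v < LB_v`;
and `0` otherwise. -/
noncomputable def gain (I : DefInstance V) (r : V → ℝ) (u : V) : ℝ :=
  if power I r u < I.LB u then I.g u
  else if power I r u < I.UB u ∧ ∃ v, I.G.Adj u v ∧ power I r v < I.LB v then I.g' u
  else 0

/-- The defending result of `r`: the maximum attacker's gain over all nodes. -/
noncomputable def defResult (I : DefInstance V) (r : V → ℝ) : ℝ :=
  ⨆ u, gain I r u

/-- `r` is a defending strategy with total resource `R`. -/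
def IsStrategy (r : V → ℝ) (R : ℝ) : Prop :=
  (∀ u, 0 ≤ r u) ∧ ∑ u, r u = R

/-- The value `α` is achievable with resource `R`: some defending strategy with total
resource `R` has defending result at most `α`. -/
def Achievable (I : DefInstance V) (α R : ℝ) : Prop :=
  ∃ r, IsStrategy r R ∧ defResult I r ≤ α

/-!
Every gain takes one of three values determined by the instance alone, so only finitely many gain
vectors occur, even though the strategies form a continuum. The defending result therefore takes
finitely many values, and its infimum over a nonempty set of strategies is attained.
-/

theorem gain_mem (I : DefInstance V) (r : V → ℝ) (u : V) :
    gain I r u ∈ ({I.g u, I.g' u, 0} : Set ℝ) := by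
  unfold gain
  split_ifs <;> simp

theorem finite_range_gain (I : DefInstance V) : (Set.range (gain I)).Finite := by
  have hpi : (Set.univ.pi fun u => ({I.g u, I.g' u, 0} : Set ℝ)).Finite :=
    Set.Finite.pi fun u => Set.toFinite _
  exact hpi.subset (Set.range_subset_iff.2 fun r u _ => gain_mem I r u)

theorem finite_range_defResult (I : DefInstance V) : (Set.range (defResult I)).Finite := by
  have hcomp : Set.range (defResult I) = iSup '' Set.range (gain I) := Set.range_comp iSup (gain I)
  exact hcomp ▸ (finite_range_gain I).image iSup

theorem isStrategy_single (u : V) {R : ℝ} (hR : 0 ≤ R) : IsStrategy (Pi.single u R) R := by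
  have hnonneg : 0 ≤ (Pi.single u R : V → ℝ) := Pi.single_nonneg.2 hR
  exact ⟨hnonneg, Fintype.sum_pi_single' u R⟩

theorem exists_optimal_strategy_general (I : DefInstance V) {S : Set (V → ℝ)}
    (hS : S.Nonempty) : ∃ r ∈ S, defResult I r = sInf (defResult I '' S) :=
  (hS.image _).csInf_mem ((finite_range_defResult I).subset (Set.image_subset_range _ S))

/-- an optimal defending strategy exists: some strategy with total resource
`R` attains the infimum of the defending results over all strategies with total resource `R`. -/
theorem exists_optimal_strategy {V : Type*} [Fintype V] [Nonempty V]
    (I : DefInstance V) (R : ℝ) (hR : 0 ≤ R) :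
    ∃ rstar : V → ℝ, IsStrategy rstar R ∧
      defResult I rstar = sInf {β : ℝ | ∃ r, IsStrategy r R ∧ defResult I r = β} :=
  exists_optimal_strategy_general I ⟨_, isStrategy_single (Classical.arbitrary V) hR⟩
end

section
/- Let α ≥ 0 and R ≥ 0. The value α is achievable with resource R if and only if there exist a subset S ⊆ B_α and a defending strategy r with total resource R such that p_u ≥ UB_u for every u ∈ S and p_v ≥ LB_v for every v ∈ A_α ∪ ⋃_{u ∈ B_α∖S} N(u), where N(u) denotes the set of neighbors of u. -/
/-!
Fix a strategy. The attacker gains at most `α ≥ 0` at `u` exactly when `u` reaches its lower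
threshold if it is vulnerable, and, if it is crucial, either it reaches its upper threshold or all
its neighbors reach their lower ones. The set `S` records which crucial nodes take the first
alternative. The condition at a crucial node does not mention its own lower threshold because
crucial nodes are vulnerable, so that threshold is already required.
-/

open scoped Classical

variable {V : Type*} [Fintype V]

/-- The vulnerable nodes `A_α`, at which falling below the lower threshold costs more than `α`. -/
def DefInstance.vulnerableNodes {V : Type*} (I : DefInstance V) (α : ℝ) : Set V :=
  {u | α < I.g u}

/-- The crucial nodes `B_α`, at which falling below the upper threshold next to a node that is
below its lower threshold costs more than `α`. -/
def DefInstance.crucialNodes {V : Type*} (I : DefInstance V) (α : ℝ) : Set V :=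
  {u | α < I.g' u}

theorem DefInstance.crucialNodes_subset_vulnerableNodes {V : Type*} (I : DefInstance V) (α : ℝ) :
    I.crucialNodes α ⊆ I.vulnerableNodes α :=
  fun u hu => lt_of_lt_of_le hu (I.g'_le_g u)

theorem forall_mem_or_iff_exists_subset {ι : Type*} {B : Set ι} {P Q : ι → Prop} :
    (∀ u ∈ B, P u ∨ Q u) ↔ ∃ S ⊆ B, (∀ u ∈ S, P u) ∧ ∀ u ∈ B \ S, Q u := by
  constructor
  · intro h
    exact ⟨{u ∈ B | P u}, Set.sep_subset B P, fun _ hu => hu.2,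
      fun u hu => (h u hu.1).resolve_left fun hP => hu.2 ⟨hu.1, hP⟩⟩
  · rintro ⟨S, -, hP, hQ⟩ u hu
    by_cases huS : u ∈ S
    · exact Or.inl (hP u huS)
    · exact Or.inr (hQ u ⟨hu, huS⟩)

theorem forall_mem_union_biUnion_iff {ι κ : Type*} {A : Set κ} {T : Set ι} {N : ι → Set κ}
    {p : κ → Prop} :
    (∀ v ∈ A ∪ ⋃ u ∈ T, N u, p v) ↔ (∀ v ∈ A, p v) ∧ ∀ u ∈ T, ∀ v ∈ N u, p v := by
  change A ∪ ⋃ u ∈ T, N u ⊆ {v | p v} ↔ A ⊆ {v | p v} ∧ ∀ u ∈ T, N u ⊆ {v | p v}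
  rw [Set.union_subset_iff, Set.iUnion₂_subset_iff]

section Strategy

variable {I : DefInstance V} {r : V → ℝ} {α : ℝ} {u : V}

theorem gain_of_power_lt_LB (hu : power I r u < I.LB u) : gain I r u = I.g u :=
  if_pos hu

theorem gain_of_LB_le_power (hu : I.LB u ≤ power I r u) :
    gain I r u =
      if power I r u < I.UB u ∧ ∃ v, I.G.Adj u v ∧ power I r v < I.LB v then I.g' u else 0 :=
  if_neg hu.not_gt

theorem gain_le_iff_of_LB_le_power (hα : 0 ≤ α) (hu : I.LB u ≤ power I r u) :
    gain I r u ≤ α ↔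
      (u ∈ I.crucialNodes α →
        I.UB u ≤ power I r u ∨ ∀ v ∈ I.G.neighborSet u, I.LB v ≤ power I r v) := by
  rw [gain_of_LB_le_power hu]
  split_ifs with hexposed
  · obtain ⟨hUB, v, huv, hv⟩ := hexposed
    have hnot : ¬ (I.UB u ≤ power I r u ∨ ∀ v ∈ I.G.neighborSet u, I.LB v ≤ power I r v) :=
      not_or.mpr ⟨hUB.not_ge, fun h => hv.not_ge (h v huv)⟩
    exact not_lt.symm.trans (imp_iff_not hnot).symm
  · have hsafe : I.UB u ≤ power I r u ∨ ∀ v ∈ I.G.neighborSet u, I.LB v ≤ power I r v := by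
      by_contra! h
      exact hexposed h
    exact iff_of_true hα fun _ => hsafe

theorem gain_le_iff (hα : 0 ≤ α) :
    gain I r u ≤ α ↔
      (u ∈ I.vulnerableNodes α → I.LB u ≤ power I r u) ∧
      (u ∈ I.crucialNodes α →
        I.UB u ≤ power I r u ∨ ∀ v ∈ I.G.neighborSet u, I.LB v ≤ power I r v) := by
  rcases le_or_gt (I.LB u) (power I r u) with hu | hu
  · rw [gain_le_iff_of_LB_le_power hα hu]
    exact (and_iff_right fun _ => hu).symm
  · rw [gain_of_power_lt_LB hu]
    constructor
    · intro hg
      have hA : u ∉ I.vulnerableNodes α := not_lt.mpr hg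
      exact ⟨fun h => absurd h hA,
        fun h => absurd (I.crucialNodes_subset_vulnerableNodes α h) hA⟩
    · exact fun h => not_lt.mp fun hA => hu.not_ge (h.1 hA)

theorem defResult_le_iff [Nonempty V] : defResult I r ≤ α ↔ ∀ u, gain I r u ≤ α :=
  ciSup_le_iff (Set.finite_range (gain I r)).bddAbove

theorem defResult_le_iff_exists_subset [Nonempty V] (hα : 0 ≤ α) :
    defResult I r ≤ α ↔
      ∃ S ⊆ I.crucialNodes α,
        (∀ u ∈ S, I.UB u ≤ power I r u) ∧
        ∀ v ∈ I.vulnerableNodes α ∪ ⋃ u ∈ I.crucialNodes α \ S, I.G.neighborSet u,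
          I.LB v ≤ power I r v :=
  calc
    defResult I r ≤ α ↔
        (∀ v ∈ I.vulnerableNodes α, I.LB v ≤ power I r v) ∧
        ∀ u ∈ I.crucialNodes α,
          I.UB u ≤ power I r u ∨ ∀ v ∈ I.G.neighborSet u, I.LB v ≤ power I r v := by
      simp only [defResult_le_iff, gain_le_iff hα, forall_and]
    _ ↔ (∀ v ∈ I.vulnerableNodes α, I.LB v ≤ power I r v) ∧
        ∃ S ⊆ I.crucialNodes α, (∀ u ∈ S, I.UB u ≤ power I r u) ∧
          ∀ u ∈ I.crucialNodes α \ S, ∀ v ∈ I.G.neighborSet u, I.LB v ≤ power I r v := by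
      rw [forall_mem_or_iff_exists_subset]
    _ ↔ _ := by
      simp only [forall_mem_union_biUnion_iff]
      constructor
      · rintro ⟨hA, S, hS, hUB, hN⟩
        exact ⟨S, hS, hUB, hA, hN⟩
      · rintro ⟨S, hS, hUB, hA, hN⟩
        exact ⟨hA, S, hS, hUB, hN⟩

end Strategy

/-- `α` is achievable with resource `R` iff there are a subset `S ⊆ B_α` of
the crucial nodes and a strategy `r` with total resource `R` such that `p_u ≥ UB_u` for all
`u ∈ S` and `p_v ≥ LB_v` for all `v ∈ A_α ∪ ⋃_{u ∈ B_α∖S} N(u)`. -/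
theorem achievable_iff_exists_subset {V : Type*} [Fintype V] [Nonempty V]
    (I : DefInstance V) (α R : ℝ) (hα : 0 ≤ α) (hR : 0 ≤ R) :
    Achievable I α R ↔
      ∃ S : Set V, S ⊆ {u | I.g' u > α} ∧
        ∃ r : V → ℝ, IsStrategy r R ∧
          (∀ u ∈ S, I.UB u ≤ power I r u) ∧
          (∀ v, (I.g v > α ∨ ∃ u, I.g' u > α ∧ u ∉ S ∧ I.G.Adj u v) →
            I.LB v ≤ power I r v) := by
  have hcover (S : Set V) (v : V) :
      v ∈ I.vulnerableNodes α ∪ ⋃ u ∈ I.crucialNodes α \ S, I.G.neighborSet u ↔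
        I.g v > α ∨ ∃ u, I.g' u > α ∧ u ∉ S ∧ I.G.Adj u v := by
    simp only [DefInstance.vulnerableNodes, DefInstance.crucialNodes, Set.mem_union,
      Set.mem_iUnion₂, Set.mem_sdiff, Set.mem_ofPred_eq, SimpleGraph.mem_neighborSet, exists_prop,
      and_assoc, gt_iff_lt]
  simp only [Achievable, defResult_le_iff_exists_subset hα, hcover]
  constructor
  · rintro ⟨r, hr, S, hS, hUB, hLB⟩
    exact ⟨S, hS, r, hr, hUB, hLB⟩
  · rintro ⟨S, hS, r, hr, hUB, hLB⟩
    exact ⟨r, hr, S, hS, hUB, hLB⟩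
end

section
/- (Reduction, forward direction) Let a DNF instance with p variables and q ≥ 1 clauses be given, let 1 ≤ t ≤ q, and suppose some truth assignment σ satisfies at least t clauses. Then the reduction instance admits a defending strategy with total resource p + (q−t)/q and defending result 0; in particular, the strategy that allocates 1 unit to each variable node whose literal is true under σ and 1/q to each clause node of a clause not satisfied by σ uses total resource at most p + (q−t)/q and has defending result 0. -/
open scoped Classical

variable {V : Type*} [Fintype V]

/-! ### The reduction instance from a DNF instance

Variables are `x_1, …, x_p` and clauses are `C_1, …, C_q`; a literal is a pair
`(i, b) : Fin p × Bool`, where `(i, true)` is `x_i` and `(i, false)` is `x̄_i`.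
The nodes of the reduction instance are: a variable node for each literal, a clause node
for each clause, and a connector node `(C_j, a)` for each literal `a` occurring in `C_j`
(connector nodes `(C_j, a)` with `a ∉ C_j` are present as isolated nodes carrying no
edges, zero value, and they play no role). -/

inductive RNode (p q : ℕ) : Type
  | var : Fin p → Bool → RNode p q
  | clause : Fin q → RNode p q
  | conn : Fin q → Fin p → Bool → RNode p q
  deriving DecidableEq, Fintype

/-- Base relation generating the edges: `x_i — x̄_i`; and, for each literal `(i,b) ∈ C j`,
connector `(C_j,(i,b))` is joined to variable node `(i,b)` and to clause node `C_j`. -/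
def redRel {p q : ℕ} (C : Fin q → Finset (Fin p × Bool)) :
    RNode p q → RNode p q → Prop := fun x y =>
  match x, y with
  | .var i _, .var i' _ => i = i'
  | .conn j i b, .var i' b' => i = i' ∧ b = b' ∧ (i, b) ∈ C j
  | .conn j i b, .clause j' => j = j' ∧ (i, b) ∈ C j
  | _, _ => False

/-- Edge weights: `1` on edges incident to a variable node, `0` on edges incident to a
clause node. -/
noncomputable def redW {p q : ℕ} : RNode p q → RNode p q → ℝ := fun x y =>
  match x, y with
  | .clause _, _ => 0
  | _, .clause _ => 0
  | _, _ => 1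

/-- Values: `g = g' = 1` on variable and clause nodes, `0` on connectors. -/
noncomputable def redg {p q : ℕ} : RNode p q → ℝ
  | .conn _ _ _ => 0
  | _ => 1

/-- Lower thresholds: `1` on variable nodes and connectors, `0` on clause nodes. -/
noncomputable def redLB {p q : ℕ} : RNode p q → ℝ
  | .clause _ => 0
  | _ => 1

/-- Upper thresholds: `1` on variable nodes and connectors, `1/q` on clause nodes. -/
noncomputable def redUB {p q : ℕ} : RNode p q → ℝ
  | .clause _ => 1 / (q : ℝ)
  | _ => 1

/-- The reduction instance associated to a DNF instance. -/
noncomputable def redInstance (p q : ℕ) (C : Fin q → Finset (Fin p × Bool)) :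
    DefInstance (RNode p q) where
  G := SimpleGraph.fromRel (redRel C)
  w := redW
  w_nonneg := by intro u v; cases u <;> cases v <;> norm_num [redW]
  w_symm := by intro u v; cases u <;> cases v <;> rfl
  LB := redLB
  UB := redUB
  g := redg
  g' := redg
  LB_nonneg := by intro u; cases u <;> norm_num [redLB]
  LB_le_UB := by intro u; cases u <;> norm_num [redLB, redUB]
  g'_nonneg := by intro u; cases u <;> norm_num [redg]
  g'_le_g := fun _ => le_rfl

/-- An assignment `σ` satisfies a clause `Cl` if every literal of `Cl` is true under `σ`. -/
def Satisfies {p : ℕ} (σ : Fin p → Bool) (Cl : Finset (Fin p × Bool)) : Prop :=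
  ∀ l ∈ Cl, σ l.1 = l.2

/-- The defending strategy built from an assignment `σ`: `1` on each variable node whose
literal is true under `σ`, `1/q` on each clause node of a clause unsatisfied by `σ`,
and `0` on connectors. -/
noncomputable def redStrategy {p q : ℕ} (C : Fin q → Finset (Fin p × Bool))
    (σ : Fin p → Bool) : RNode p q → ℝ
  | .var i b => if σ i = b then 1 else 0
  | .clause j => if Satisfies σ (C j) then 0 else 1 / (q : ℝ)
  | .conn _ _ _ => 0

/-!
The attacker's gain at a node is antitone in the allocation: extra resource only raises defending
powers, and `0 ≤ g' ≤ g`. Surplus resource may thus be dumped on any node, and it suffices to treat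
`redStrategy`. There every variable node has power at least `1`, from itself or from the
complementary literal. An unsatisfied clause meets its upper threshold `1/q` on its own; a satisfied
clause is adjacent only to connectors of true literals, each of which draws power `1` from its
literal.
-/

section Instance

variable (I : DefInstance V) {r : V → ℝ} {u v : V}

theorem power_mono : Monotone (power I) := fun _ _ hrs u =>
  add_le_add (hrs u) <| Finset.sum_le_sum fun v _ =>
    mul_le_mul_of_nonneg_left (hrs v) (I.w_nonneg u v)

theorem le_power (hr : 0 ≤ r) (u : V) : r u ≤ power I r u :=
  le_add_of_nonneg_right <| Finset.sum_nonneg fun v _ => mul_nonneg (I.w_nonneg u v) (hr v)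

theorem weight_mul_le_power (hr : 0 ≤ r) (huv : I.G.Adj u v) : I.w u v * r v ≤ power I r u :=
  calc I.w u v * r v
      ≤ ∑ v ∈ Finset.univ.filter (fun v => I.G.Adj u v), I.w u v * r v :=
        Finset.single_le_sum (f := fun v => I.w u v * r v)
          (fun v _ => mul_nonneg (I.w_nonneg u v) (hr v)) (by simpa using huv)
    _ ≤ power I r u := le_add_of_nonneg_left (hr u)

theorem gain_nonneg (r : V → ℝ) (u : V) : 0 ≤ gain I r u := by
  unfold gain
  split_ifs
  exacts [(I.g'_nonneg u).trans (I.g'_le_g u), I.g'_nonneg u, le_rfl]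

theorem gain_le_g (r : V → ℝ) (u : V) : gain I r u ≤ I.g u := by
  unfold gain
  split_ifs
  exacts [le_rfl, I.g'_le_g u, (I.g'_nonneg u).trans (I.g'_le_g u)]

theorem gain_le_g' (hu : I.LB u ≤ power I r u) : gain I r u ≤ I.g' u := by
  rw [gain, if_neg hu.not_gt]
  split_ifs
  exacts [le_rfl, I.g'_nonneg u]

theorem gain_eq_zero_of_UB_le_power (hu : I.UB u ≤ power I r u) : gain I r u = 0 := by
  rw [gain, if_neg ((I.LB_le_UB u).trans hu).not_gt, if_neg fun h => hu.not_gt h.1]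

theorem gain_eq_zero_of_neighbors_LB_le_power (hu : I.LB u ≤ power I r u)
    (hnbr : ∀ v, I.G.Adj u v → I.LB v ≤ power I r v) : gain I r u = 0 := by
  rw [gain, if_neg hu.not_gt, if_neg]
  rintro ⟨-, v, huv, hv⟩
  exact (hnbr v huv).not_gt hv

theorem gain_anti (u : V) : Antitone fun r => gain I r u := by
  intro r s hrs
  have hpow := power_mono I hrs
  change gain I s u ≤ gain I r u
  by_cases hLB : power I r u < I.LB u
  · calc gain I s u ≤ I.g u := gain_le_g I s u
      _ = gain I r u := (if_pos hLB).symm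
  have hLBs : I.LB u ≤ power I s u := (not_lt.1 hLB).trans (hpow u)
  by_cases hexp : power I r u < I.UB u ∧ ∃ v, I.G.Adj u v ∧ power I r v < I.LB v
  · calc gain I s u ≤ I.g' u := gain_le_g' I hLBs
      _ = gain I r u := by rw [gain, if_neg hLB, if_pos hexp]
  · have hsafe : gain I s u = 0 := by
      rw [gain, if_neg hLBs.not_gt, if_neg]
      rintro ⟨hUB, v, huv, hv⟩
      exact hexp ⟨(hpow u).trans_lt hUB, v, huv, (hpow v).trans_lt hv⟩
    exact hsafe.trans_le (gain_nonneg I r u)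

theorem defResult_nonneg (r : V → ℝ) : 0 ≤ defResult I r :=
  Real.iSup_nonneg (gain_nonneg I r)

theorem defResult_anti : Antitone (defResult I) := fun _ _ hrs =>
  ciSup_mono (Set.finite_range _).bddAbove fun u => gain_anti I u hrs

end Instance

theorem IsStrategy.exists_ge_of_le [Nonempty V] {r : V → ℝ} {R R' : ℝ} (hr : IsStrategy r R)
    (hR : R ≤ R') : ∃ s, IsStrategy s R' ∧ r ≤ s := by
  let u₀ := Classical.arbitrary V
  have hle : r ≤ r + Pi.single u₀ (R' - R) :=
    le_add_of_nonneg_right (Pi.single_nonneg.2 (sub_nonneg.2 hR))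
  refine ⟨_, ⟨fun u => (hr.1 u).trans (hle u), ?_⟩, hle⟩
  simp only [Pi.add_apply, Finset.sum_add_distrib, hr.2, Finset.sum_pi_single', Finset.mem_univ,
    if_true, add_sub_cancel]

/-- The nodes of the reduction instance as the disjoint union of literals, clauses and
clause-literal pairs; used to split sums over nodes. -/
def RNode.equivSum (p q : ℕ) : RNode p q ≃ (Fin p × Bool) ⊕ Fin q ⊕ (Fin q × Fin p × Bool) where
  toFun
    | .var i b => .inl (i, b)
    | .clause j => .inr (.inl j)
    | .conn j i b => .inr (.inr (j, i, b))
  invFun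
    | .inl (i, b) => .var i b
    | .inr (.inl j) => .clause j
    | .inr (.inr (j, i, b)) => .conn j i b
  left_inv x := by cases x <;> rfl
  right_inv x := by rcases x with _ | _ | _ <;> rfl

theorem RNode.sum_eq {p q : ℕ} {M : Type*} [AddCommMonoid M] (f : RNode p q → M) :
    ∑ x, f x = ∑ i, ∑ b, f (.var i b) +
      (∑ j, f (.clause j) + ∑ j, ∑ i, ∑ b, f (.conn j i b)) := by
  rw [← (RNode.equivSum p q).symm.sum_comp]
  simp only [Fintype.sum_sum_type, Fintype.sum_prod_type]
  rfl

section Reduction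

variable {p q : ℕ} (C : Fin q → Finset (Fin p × Bool)) (σ : Fin p → Bool)

theorem redInstance_adj_var_var (i : Fin p) {b b' : Bool} (hb : b ≠ b') :
    (redInstance p q C).G.Adj (.var i b) (.var i b') := by
  simp [redInstance, redRel, hb]

theorem redInstance_adj_conn_var {j : Fin q} {i : Fin p} {b : Bool} (hmem : (i, b) ∈ C j) :
    (redInstance p q C).G.Adj (.conn j i b) (.var i b) := by
  simp [redInstance, redRel, hmem]

theorem exists_conn_of_redInstance_adj_clause {j : Fin q} {x : RNode p q}
    (hx : (redInstance p q C).G.Adj (.clause j) x) :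
    ∃ i b, (i, b) ∈ C j ∧ x = .conn j i b := by
  cases x with
  | conn j' i b =>
    obtain ⟨rfl, hmem⟩ : j' = j ∧ (i, b) ∈ C j' := by simpa [redInstance, redRel] using hx
    exact ⟨i, b, hmem, rfl⟩
  | _ => simp [redInstance, redRel] at hx

theorem redStrategy_nonneg : 0 ≤ redStrategy C σ := by
  rintro (⟨i, b⟩ | j | ⟨j, i, b⟩) <;> simp only [redStrategy, Pi.zero_apply]
  · split_ifs <;> norm_num
  · split_ifs <;> positivity
  · exact le_rfl

theorem redStrategy_true_literal (i : Fin p) : redStrategy C σ (.var i (σ i)) = 1 :=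
  if_pos rfl

theorem one_le_power_var (i : Fin p) (b : Bool) :
    1 ≤ power (redInstance p q C) (redStrategy C σ) (.var i b) := by
  have hr := redStrategy_nonneg C σ
  by_cases hb : b = σ i
  · subst hb
    exact (redStrategy_true_literal C σ i).ge.trans (le_power _ hr _)
  · simpa [redInstance, redW, redStrategy_true_literal] using
      weight_mul_le_power _ hr (redInstance_adj_var_var C i hb)

theorem one_le_power_conn {j : Fin q} {i : Fin p} (hmem : (i, σ i) ∈ C j) :
    1 ≤ power (redInstance p q C) (redStrategy C σ) (.conn j i (σ i)) := by
  simpa [redInstance, redW, redStrategy_true_literal] using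
    weight_mul_le_power _ (redStrategy_nonneg C σ) (redInstance_adj_conn_var C hmem)

theorem gain_redStrategy_clause (j : Fin q) :
    gain (redInstance p q C) (redStrategy C σ) (.clause j) = 0 := by
  have hr := redStrategy_nonneg C σ
  have hself := le_power (redInstance p q C) hr (.clause j)
  by_cases hsat : Satisfies σ (C j)
  · refine gain_eq_zero_of_neighbors_LB_le_power _ ((hr _).trans hself) fun x hx => ?_
    obtain ⟨i, b, hmem, rfl⟩ := exists_conn_of_redInstance_adj_clause C hx
    obtain rfl : σ i = b := hsat _ hmem
    exact one_le_power_conn C σ hmem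
  · have hown : redStrategy C σ (.clause j) = 1 / q := if_neg hsat
    exact gain_eq_zero_of_UB_le_power _ (hown.ge.trans hself)

theorem gain_redStrategy (x : RNode p q) : gain (redInstance p q C) (redStrategy C σ) x = 0 := by
  cases x with
  | var i b => exact gain_eq_zero_of_UB_le_power _ (one_le_power_var C σ i b)
  | clause j => exact gain_redStrategy_clause C σ j
  | conn j i b => exact (gain_le_g _ _ _).antisymm (gain_nonneg _ _ _)

theorem defResult_redStrategy : defResult (redInstance p q C) (redStrategy C σ) = 0 := by
  simp only [defResult, gain_redStrategy, Real.iSup_const_zero]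

theorem sum_redStrategy : ∑ x, redStrategy C σ x =
    p + ((Finset.univ.filter fun j => ¬ Satisfies σ (C j)).card : ℝ) / q := by
  simp [RNode.sum_eq, redStrategy, Finset.sum_ite, div_eq_mul_inv]

theorem sum_redStrategy_le {t : ℕ}
    (hσ : t ≤ (Finset.univ.filter fun j => Satisfies σ (C j)).card) :
    ∑ x, redStrategy C σ x ≤ (p : ℝ) + ((q : ℝ) - (t : ℝ)) / (q : ℝ) := by
  have hsplit : (Finset.univ.filter fun j => Satisfies σ (C j)).card +
      (Finset.univ.filter fun j => ¬ Satisfies σ (C j)).card = q := by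
    simpa using Finset.card_filter_add_card_filter_not (s := Finset.univ)
      fun j => Satisfies σ (C j)
  have hunsat : (Finset.univ.filter fun j => ¬ Satisfies σ (C j)).card + t ≤ q := by omega
  rw [sum_redStrategy]
  gcongr
  exact le_sub_iff_add_le.2 (mod_cast hunsat)

end Reduction

/-- reduction, forward direction: if `σ` satisfies at least `t` of the `q`
clauses, then the above strategy is nonnegative, uses total resource at most
`p + (q - t)/q`, and has defending result `0`; in particular the reduction instance admits
a defending strategy with total resource `p + (q - t)/q` and defending result `0`. -/
theorem reduction_forward (p q : ℕ) (hq : 1 ≤ q) (C : Fin q → Finset (Fin p × Bool))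
    (t : ℕ) (ht : 1 ≤ t) (htq : t ≤ q) (σ : Fin p → Bool)
    (hσ : t ≤ (Finset.univ.filter fun j => Satisfies σ (C j)).card) :
    (∀ x, 0 ≤ redStrategy C σ x) ∧
    (∑ x, redStrategy C σ x ≤ (p : ℝ) + ((q : ℝ) - (t : ℝ)) / (q : ℝ)) ∧
    defResult (redInstance p q C) (redStrategy C σ) = 0 ∧
    ∃ r : RNode p q → ℝ, IsStrategy r ((p : ℝ) + ((q : ℝ) - (t : ℝ)) / (q : ℝ)) ∧
      defResult (redInstance p q C) r = 0 := by
  have hle := sum_redStrategy_le C σ hσ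
  have hzero := defResult_redStrategy C σ
  refine ⟨redStrategy_nonneg C σ, hle, hzero, ?_⟩
  have : Nonempty (RNode p q) := ⟨.clause ⟨0, hq⟩⟩
  obtain ⟨r, hr, hge⟩ := IsStrategy.exists_ge_of_le ⟨redStrategy_nonneg C σ, rfl⟩ hle
  exact ⟨r, hr, ((defResult_anti _ hge).trans hzero.le).antisymm (defResult_nonneg _ r)⟩
end

section
/- (Integrality gap of 2) In the two-node instance with target α = 0 (so A_0 = B_0 = {u} and V∖A_0 = {v}), the LP relaxation LP(0, 1/2) is feasible: the solution y_u = y_v = 1/2, r_u = 1/2, r_v = 0 satisfies all constraints of LP(0, 1/2). Combined with the fact that no defending strategy with total resource less than 1 achieves defending result 0, this shows the integrality gap of the LP relaxation is at least 2. -/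
open scoped Classical

variable {V : Type*} [Fintype V]

/-- The LP relaxation `LP(α, R')`: reals `y_u` (for `u ∈ B_α ∪ (V∖A_α)`, i.e. `g'_u > α`
or `¬ g_u > α`) and `r_u ≥ 0` for `u ∈ V` with: `y_u + y_v ≥ 1` for every edge `(u,v)`
with `u ∈ B_α`, `v ∈ V∖A_α`; `p_u ≥ LB_u + y_u·(UB_u − LB_u)` for `u ∈ B_α`;
`p_u ≥ LB_u` for `u ∈ A_α∖B_α`; `p_v ≥ y_v·LB_v` for `v ∈ V∖A_α`; and `∑_u r_u = R'`. -/
def LPFeasible {V : Type*} [Fintype V] (I : DefInstance V) (α R' : ℝ)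
    (y r : V → ℝ) : Prop :=
  (∀ u, (I.g' u > α ∨ ¬ I.g u > α) → 0 ≤ y u) ∧
  (∀ u, 0 ≤ r u) ∧
  (∀ u v, I.G.Adj u v → I.g' u > α → ¬ I.g v > α → 1 ≤ y u + y v) ∧
  (∀ u, I.g' u > α → I.LB u + y u * (I.UB u - I.LB u) ≤ power I r u) ∧
  (∀ u, I.g u > α → ¬ I.g' u > α → I.LB u ≤ power I r u) ∧
  (∀ v, ¬ I.g v > α → y v * I.LB v ≤ power I r v) ∧
  ∑ u, r u = R'

/-- The two-node instance: nodes `u` (= `true`) and `v` (= `false`) joined by a single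
edge of weight `w_{uv} = 1`, with `g_u = g'_u = 1`, `g_v = g'_v = 0`, `LB_u = 0`,
`UB_u = 1`, `LB_v = 1`, `UB_v = 2`. -/
noncomputable def twoNode : DefInstance Bool where
  G := ⊤
  w := fun _ _ => 1
  w_nonneg := by intro u v; norm_num
  w_symm := fun _ _ => rfl
  LB := fun x => if x then 0 else 1
  UB := fun x => if x then 1 else 2
  g := fun x => if x then 1 else 0
  g' := fun x => if x then 1 else 0
  LB_nonneg := by intro u; cases u <;> norm_num
  LB_le_UB := by intro u; cases u <;> norm_num
  g'_nonneg := by intro u; cases u <;> norm_num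
  g'_le_g := by intro u; cases u <;> norm_num

/-!
In the two-node instance both nodes have power equal to the total resource `R`, because the graph is
complete with unit weights. The crucial node `u` is safe only if its own power reaches `UB_u = 1` or
that of `v` reaches `LB_v = 1`, so an actual strategy needs `R ≥ 1`. The relaxation replaces this
disjunction by `y_u + y_v ≥ 1` with `p_u ≥ y_u` and `p_v ≥ y_v`, and both of these are met by the
same resource `R = 1 / 2` when `y_u = y_v = 1 / 2`.
-/

theorem gain_le_defResult (I : DefInstance V) (r : V → ℝ) (u : V) :
    gain I r u ≤ defResult I r :=
  le_ciSup (Set.finite_range (gain I r)).bddAbove u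

theorem g'_le_gain_of_power_lt {I : DefInstance V} {r : V → ℝ} {u v : V} (huv : I.G.Adj u v)
    (hu : power I r u < I.UB u) (hv : power I r v < I.LB v) : I.g' u ≤ gain I r u := by
  unfold gain
  split_ifs with _ hUB
  · exact I.g'_le_g u
  · exact le_rfl
  · exact absurd ⟨hu, v, huv, hv⟩ hUB

theorem UB_le_power_or_LB_le_power_of_defResult_le {I : DefInstance V} {r : V → ℝ} {α : ℝ}
    {u v : V} (hr : defResult I r ≤ α) (hu : α < I.g' u) (huv : I.G.Adj u v) :
    I.UB u ≤ power I r u ∨ I.LB v ≤ power I r v := by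
  by_contra! ⟨hUB, hLB⟩
  exact (hu.trans_le (g'_le_gain_of_power_lt huv hUB hLB)).not_ge
    ((gain_le_defResult I r u).trans hr)

theorem power_eq_sum_of_forall_adj {I : DefInstance V} {u : V} (hadj : ∀ v, u ≠ v → I.G.Adj u v)
    (hw : ∀ v, u ≠ v → I.w u v = 1) (r : V → ℝ) : power I r u = ∑ v, r v := by
  have hneighbors : Finset.univ.filter (fun v => I.G.Adj u v) = Finset.univ.erase u := by
    ext v
    simpa [eq_comm] using (⟨SimpleGraph.Adj.ne, hadj v⟩ : I.G.Adj u v ↔ u ≠ v)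
  have hweights : ∑ v ∈ Finset.univ.erase u, I.w u v * r v = ∑ v ∈ Finset.univ.erase u, r v :=
    Finset.sum_congr rfl fun v hv => by rw [hw v (Finset.ne_of_mem_erase hv).symm, one_mul]
  rw [power, hneighbors, hweights, Finset.add_sum_erase _ r (Finset.mem_univ u)]

theorem power_twoNode (r : Bool → ℝ) (u : Bool) : power twoNode r u = ∑ v, r v :=
  power_eq_sum_of_forall_adj (fun _ huv => huv) (fun _ _ => rfl) r

theorem lpFeasible_twoNode_zero_iff {R : ℝ} {y r : Bool → ℝ} :
    LPFeasible twoNode 0 R y r ↔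
      (∀ u, 0 ≤ y u) ∧ (∀ u, 0 ≤ r u) ∧ 1 ≤ y true + y false ∧
        y true ≤ ∑ u, r u ∧ y false ≤ ∑ u, r u ∧ ∑ u, r u = R := by
  simp only [LPFeasible, power_twoNode]
  simp [twoNode]

theorem one_le_of_achievable_twoNode_zero {R : ℝ} (hR : Achievable twoNode 0 R) : 1 ≤ R := by
  obtain ⟨r, ⟨-, hsum⟩, hr⟩ := hR
  have hsafe : twoNode.UB true ≤ power twoNode r true ∨ twoNode.LB false ≤ power twoNode r false :=
    UB_le_power_or_LB_le_power_of_defResult_le hr (by simp [twoNode]) (by simp [twoNode])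
  rw [power_twoNode, power_twoNode, hsum] at hsafe
  simpa [twoNode] using hsafe

/-- integrality gap of 2: in the two-node instance with target `α = 0`,
the solution `y_u = y_v = 1/2`, `r_u = 1/2`, `r_v = 0` is feasible for `LP(0, 1/2)`,
while no defending strategy with total resource less than `1` achieves defending
result `0`. -/
theorem twoNode_integrality_gap :
    LPFeasible twoNode 0 (1 / 2) (fun _ => 1 / 2) (fun x => if x then 1 / 2 else 0) ∧
    (∀ R : ℝ, R < 1 → ¬ Achievable twoNode 0 R) := by
  refine ⟨lpFeasible_twoNode_zero_iff.mpr ?_,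
    fun R hR hach => hR.not_ge (one_le_of_achievable_twoNode_zero hach)⟩
  norm_num
end
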